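/- Let r = 13 and let G_7 ≤ GL(2, F_13) be the subgroup generated by [[2,0],[0,2]], [[2,0],[0,3]], [[0,-1],[1,0]], [[1,1],[-1,1]]. Then every orbit of S(G_7) = G_7 ∩ SL(2, F_13) acting on F_13^2 \ {(0,0)} has cardinality 24. In particular, S(G_7) fixes no 1-dimensional subspace of F_13^2. -/

import Mathlib

open Matrix

/-- The index set of the elements `i ^ a * j ^ b * ω ^ c` of the binary tetrahedral group. -/
abbrev TetrahedralIndex := Fin 4 × Fin 2 × Fin 3

/-- The quaternion unit `i`. -/
def quatI : GL (Fin 2) (ZMod 13) :=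
  ⟨!![0, -1; 1, 0], !![0, 1; -1, 0], by decide, by decide⟩

/-- The quaternion unit `j`; note that `5 ^ 2 = -1` modulo `13`. -/
def quatJ : GL (Fin 2) (ZMod 13) :=
  ⟨!![5, 0; 0, -5], !![-5, 0; 0, 5], by decide, by decide⟩

/-- The Hurwitz unit `(1 + i + j + i * j) / 2`. -/
def quatOmega : GL (Fin 2) (ZMod 13) :=
  ⟨!![3, 2; 3, 11], !![11, -2; -3, 3], by decide, by decide⟩

/-- The scalar matrix `2`. -/
def scalarTwo : GL (Fin 2) (ZMod 13) :=
  ⟨!![2, 0; 0, 2], !![7, 0; 0, 7], by decide, by decide⟩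

/-- The diagonal matrix with entries `2` and `3`, a multiple of `1 + j`. -/
def diagTwoThree : GL (Fin 2) (ZMod 13) :=
  ⟨!![2, 0; 0, 3], !![7, 0; 0, 9], by decide, by decide⟩

/-- The matrix `1 - i`. -/
def oneSubI : GL (Fin 2) (ZMod 13) :=
  ⟨!![1, 1; -1, 1], !![7, -7; 7, 7], by decide, by decide⟩

/-- The elements of the binary tetrahedral group in `SL(2, 13)`. -/
def tetrahedral (p : TetrahedralIndex) : GL (Fin 2) (ZMod 13) :=
  quatI ^ (p.1 : ℕ) * quatJ ^ (p.2.1 : ℕ) * quatOmega ^ (p.2.2 : ℕ)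

/-- The matrix of an element of the binary tetrahedral group. -/
abbrev tetrahedralMatrix (p : TetrahedralIndex) : Matrix (Fin 2) (Fin 2) (ZMod 13) :=
  (tetrahedral p).val

theorem det_tetrahedralMatrix (p : TetrahedralIndex) : (tetrahedralMatrix p).det = 1 := by
  rw [det_fin_two]
  revert p
  decide +kernel

theorem det_tetrahedralMatrix_sub_ne_zero {p q : TetrahedralIndex} (h : p ≠ q) :
    (tetrahedralMatrix p - tetrahedralMatrix q).det ≠ 0 := by
  rw [det_fin_two]
  revert p q
  decide +kernel

/-- The matrices mapping the binary tetrahedral group into itself by left multiplication. -/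
def leftStabilizer : Submonoid (Matrix (Fin 2) (Fin 2) (ZMod 13)) where
  carrier := {M | ∀ q, ∃ r, M * tetrahedralMatrix q = tetrahedralMatrix r}
  one_mem' q := ⟨q, one_mul _⟩
  mul_mem' {M N} hM hN q := by
    obtain ⟨r, hr⟩ := hN q
    obtain ⟨t, ht⟩ := hM r
    exact ⟨t, by rw [mul_assoc, hr, ht]⟩

theorem exists_tetrahedralMatrix_mul (p q : TetrahedralIndex) :
    ∃ r, tetrahedralMatrix p * tetrahedralMatrix q = tetrahedralMatrix r := by
  have hi : quatI.val ∈ leftStabilizer := by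
    change ∀ q, ∃ r, quatI.val * tetrahedralMatrix q = tetrahedralMatrix r
    decide +kernel
  have hj : quatJ.val ∈ leftStabilizer := by
    change ∀ q, ∃ r, quatJ.val * tetrahedralMatrix q = tetrahedralMatrix r
    decide +kernel
  have hw : quatOmega.val ∈ leftStabilizer := by
    change ∀ q, ∃ r, quatOmega.val * tetrahedralMatrix q = tetrahedralMatrix r
    decide +kernel
  have hp : tetrahedralMatrix p ∈ leftStabilizer :=
    mul_mem (mul_mem (pow_mem hi _) (pow_mem hj _)) (pow_mem hw _)
  exact hp q

theorem exists_neg_tetrahedralMatrix (p : TetrahedralIndex) :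
    ∃ r, -tetrahedralMatrix p = tetrahedralMatrix r := by
  revert p
  decide +kernel

theorem exists_generator_mul_diagTwoThree_pow (e : Fin 2) :
    (∃ c : ZMod 13, ∃ e' : Fin 2, ∃ r, diagTwoThree.val * diagTwoThree.val ^ (e : ℕ) =
      c • (diagTwoThree.val ^ (e' : ℕ) * tetrahedralMatrix r)) ∧
    (∃ c : ZMod 13, ∃ e' : Fin 2, ∃ r, quatI.val * diagTwoThree.val ^ (e : ℕ) =
      c • (diagTwoThree.val ^ (e' : ℕ) * tetrahedralMatrix r)) ∧
    (∃ c : ZMod 13, ∃ e' : Fin 2, ∃ r, oneSubI.val * diagTwoThree.val ^ (e : ℕ) =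
      c • (diagTwoThree.val ^ (e' : ℕ) * tetrahedralMatrix r)) := by
  revert e
  decide +kernel

theorem mem_generators_iff (g : GL (Fin 2) (ZMod 13)) :
    (g.val = !![2, 0; 0, 2] ∨ g.val = !![2, 0; 0, 3] ∨ g.val = !![0, -1; 1, 0] ∨
      g.val = !![1, 1; -1, 1]) ↔
    g = scalarTwo ∨ g = diagTwoThree ∨ g = quatI ∨ g = oneSubI := by
  simp only [Units.ext_iff]
  rfl

/-- The set of generators of the group `G₇` of Zywina. -/
abbrev generators : Set (GL (Fin 2) (ZMod 13)) :=
  {g | g.val = !![2, 0; 0, 2] ∨ g.val = !![2, 0; 0, 3] ∨ g.val = !![0, -1; 1, 0] ∨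
      g.val = !![1, 1; -1, 1]}

theorem tetrahedral_mem_closure (p : TetrahedralIndex) :
    tetrahedral p ∈ Subgroup.closure generators := by
  have gen {g} (h : g = scalarTwo ∨ g = diagTwoThree ∨ g = quatI ∨ g = oneSubI) :
      g ∈ Subgroup.closure generators :=
    Subgroup.subset_closure ((mem_generators_iff g).2 h)
  have hz := gen (.inl rfl)
  have ht := gen (.inr (.inl rfl))
  have hi := gen (.inr (.inr (.inl rfl)))
  have hx := gen (.inr (.inr (.inr rfl)))
  have hj : quatJ = scalarTwo ^ 7 * diagTwoThree ^ 2 := by decide +kernel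
  have hw : quatOmega = scalarTwo ^ 3 * (oneSubI * quatI * diagTwoThree) := by decide +kernel
  have hj' : quatJ ∈ Subgroup.closure generators :=
    hj ▸ mul_mem (pow_mem hz 7) (pow_mem ht 2)
  have hw' : quatOmega ∈ Subgroup.closure generators :=
    hw ▸ mul_mem (pow_mem hz 3) (mul_mem (mul_mem hx hi) ht)
  exact mul_mem (mul_mem (pow_mem hi _) (pow_mem hj' _)) (pow_mem hw' _)

theorem exists_eq_smul_of_mem_closure {g : GL (Fin 2) (ZMod 13)}
    (hg : g ∈ Subgroup.closure generators) :
    ∃ c : ZMod 13, ∃ e : Fin 2, ∃ r,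
      g.val = c • (diagTwoThree.val ^ (e : ℕ) * tetrahedralMatrix r) := by
  rw [← Subgroup.mem_toSubmonoid, Subgroup.closure_toSubmonoid_of_finite] at hg
  induction hg using Submonoid.closure_induction_left with
  | one => exact ⟨1, 0, 0, by decide +kernel⟩
  | mul_left x hx y _ ih =>
    obtain ⟨c, e, r, hy⟩ := ih
    have step (h : ∃ c : ZMod 13, ∃ e' : Fin 2, ∃ r, x.val * diagTwoThree.val ^ (e : ℕ) =
        c • (diagTwoThree.val ^ (e' : ℕ) * tetrahedralMatrix r)) :
        ∃ c : ZMod 13, ∃ e : Fin 2, ∃ r,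
          (x * y).val = c • (diagTwoThree.val ^ (e : ℕ) * tetrahedralMatrix r) := by
      obtain ⟨c', e', r', h⟩ := h
      obtain ⟨q, hq⟩ := exists_tetrahedralMatrix_mul r' r
      refine ⟨c * c', e', q, ?_⟩
      rw [Units.val_mul, hy, mul_smul_comm, ← mul_assoc, h, smul_mul_assoc, mul_assoc, hq,
        smul_smul]
    obtain ⟨ht, hi, hx'⟩ := exists_generator_mul_diagTwoThree_pow e
    rcases (mem_generators_iff x).1 hx with rfl | rfl | rfl | rfl
    · have hz : scalarTwo.val = (2 : ZMod 13) • 1 := by decide +kernel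
      exact ⟨2 * c, e, r, by rw [Units.val_mul, hy, hz, smul_mul_assoc, one_mul, smul_smul]⟩
    · exact step ht
    · exact step hi
    · exact step hx'

theorem exists_eq_tetrahedralMatrix {g : GL (Fin 2) (ZMod 13)}
    (hg : g ∈ Subgroup.closure generators) (hdet : g.val.det = 1) :
    ∃ r, g.val = tetrahedralMatrix r := by
  obtain ⟨c, e, r, h⟩ := exists_eq_smul_of_mem_closure hg
  have ht : diagTwoThree.val.det = 6 := by rw [det_fin_two]; decide +kernel
  have hsq : ∀ (c : ZMod 13) (e : Fin 2), c ^ 2 * 6 ^ (e : ℕ) = 1 →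
      e = 0 ∧ (c = 1 ∨ c = -1) := by decide +kernel
  rw [h, det_smul, det_mul, det_pow, det_tetrahedralMatrix, ht, mul_one, Fintype.card_fin] at hdet
  obtain ⟨rfl, rfl | rfl⟩ := hsq c e hdet
  · exact ⟨r, by simpa using h⟩
  · obtain ⟨q, hq⟩ := exists_neg_tetrahedralMatrix r
    exact ⟨q, by simpa [← hq] using h⟩

theorem tetrahedralMatrix_mulVec_injective {v : Fin 2 → ZMod 13} (hv : v ≠ 0) :
    Function.Injective fun p => tetrahedralMatrix p *ᵥ v := by
  have : Fact (Nat.Prime 13) := ⟨by norm_num⟩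
  intro p q h
  by_contra hpq
  refine hv (eq_zero_of_mulVec_eq_zero (det_tetrahedralMatrix_sub_ne_zero hpq) ?_)
  rw [sub_mulVec]
  exact sub_eq_zero.2 h

theorem stmt_14
    (G : Subgroup (Matrix.GeneralLinearGroup (Fin 2) (ZMod 13)))
    (hG : G = Subgroup.closure
      {g : Matrix.GeneralLinearGroup (Fin 2) (ZMod 13) |
        (g : Matrix (Fin 2) (Fin 2) (ZMod 13)) = !![2, 0; 0, 2] ∨
        (g : Matrix (Fin 2) (Fin 2) (ZMod 13)) = !![2, 0; 0, 3] ∨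
        (g : Matrix (Fin 2) (Fin 2) (ZMod 13)) = !![0, -1; 1, 0] ∨
        (g : Matrix (Fin 2) (Fin 2) (ZMod 13)) = !![1, 1; -1, 1]}) :
    (∀ v : Fin 2 → ZMod 13, v ≠ 0 →
      Set.ncard {w : Fin 2 → ZMod 13 |
        ∃ g ∈ G, (g : Matrix (Fin 2) (Fin 2) (ZMod 13)).det = 1 ∧
          (g : Matrix (Fin 2) (Fin 2) (ZMod 13)).mulVec v = w} = 24) ∧
    ¬ ∃ L : Submodule (ZMod 13) (Fin 2 → ZMod 13),
      Module.finrank (ZMod 13) L = 1 ∧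
      ∀ g ∈ G, (g : Matrix (Fin 2) (Fin 2) (ZMod 13)).det = 1 →
        Submodule.map (g : Matrix (Fin 2) (Fin 2) (ZMod 13)).mulVecLin L = L := by
  have orbit_card : ∀ v : Fin 2 → ZMod 13, v ≠ 0 →
      Set.ncard {w : Fin 2 → ZMod 13 |
        ∃ g ∈ G, (g : Matrix (Fin 2) (Fin 2) (ZMod 13)).det = 1 ∧
          (g : Matrix (Fin 2) (Fin 2) (ZMod 13)).mulVec v = w} = 24 := by
    intro v hv
    have hrange : {w : Fin 2 → ZMod 13 |
        ∃ g ∈ G, (g : Matrix (Fin 2) (Fin 2) (ZMod 13)).det = 1 ∧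
          (g : Matrix (Fin 2) (Fin 2) (ZMod 13)).mulVec v = w} =
        Set.range fun p => tetrahedralMatrix p *ᵥ v := by
      ext w
      constructor
      · rintro ⟨g, hg, hdet, rfl⟩
        obtain ⟨r, hr⟩ := exists_eq_tetrahedralMatrix (hG ▸ hg) hdet
        exact ⟨r, by rw [hr]⟩
      · rintro ⟨p, rfl⟩
        exact ⟨tetrahedral p, hG ▸ tetrahedral_mem_closure p, det_tetrahedralMatrix p, rfl⟩
    rw [hrange, Set.ncard_range_of_injective (tetrahedralMatrix_mulVec_injective hv)]
    simp
  refine ⟨orbit_card, ?_⟩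
  rintro ⟨L, hL, hfix⟩
  have : Fact (Nat.Prime 13) := ⟨by norm_num⟩
  have hbot : L ≠ ⊥ := by
    rintro rfl
    simp at hL
  obtain ⟨v, hvL, hv⟩ := L.exists_mem_ne_zero_of_ne_bot hbot
  have hcard : (L : Set (Fin 2 → ZMod 13)).ncard = 13 := by
    rw [← Nat.card_coe_set_eq]
    simpa [hL] using Module.natCard_eq_pow_finrank (K := ZMod 13) (V := L)
  have hle := Set.ncard_le_ncard (t := (L : Set (Fin 2 → ZMod 13))) (s := {w : Fin 2 → ZMod 13 |
        ∃ g ∈ G, (g : Matrix (Fin 2) (Fin 2) (ZMod 13)).det = 1 ∧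
          (g : Matrix (Fin 2) (Fin 2) (ZMod 13)).mulVec v = w}) (by
    rintro w ⟨g, hg, hdet, rfl⟩
    exact (hfix g hg hdet).le (Submodule.mem_map_of_mem hvL)) (Set.toFinite _)
  rw [orbit_card v hv, hcard] at hle
  omega
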